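/- arXiv:2009.11682 — 2 statements merged into one kernel-verified Lean document; each statement's English description precedes it below -/
import Mathlib

section
/- Let ℛ be a finite irreducible crystallographic root system in an N-dimensional Euclidean space with Weyl-invariant inner product ⟨·,·⟩, and let c : ℛ → ℂ be a multiplicity function invariant under the Weyl group W of ℛ. Then for every α ∈ ℛ and every α-series Γ one has Σ_{β∈Γ} c_β ⟨α,β⟩·(α∧β) = 0. Consequently, if the bilinear form G_ℛ(u,v) = Σ_{α∈ℛ} c_α ⟨α,u⟩⟨α,v⟩ is non-degenerate, then (ℛ,c) is a trigonometric ∨-system, i.e. Σ_{β∈Γ} c_β ⟨α, β^∨⟩_G (α∧β) = 0 for every α ∈ ℛ and every α-series Γ, where β^∨ is the G_ℛ-dual vector of β. -/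
open scoped Classical
open Finset

noncomputable section

/-- The inner product on `ℝ^N` determined by a (positive definite) matrix `B`. -/
def ipB {N : ℕ} (B : Matrix (Fin N) (Fin N) ℝ) (u v : Fin N → ℝ) : ℝ :=
  ∑ i, ∑ j, B i j * u i * v j

/-- The complex-bilinear extension `⟨α, w⟩` for a real covector `α` and `w ∈ ℂ^N`. -/
def ipBC {N : ℕ} (B : Matrix (Fin N) (Fin N) ℝ) (α : Fin N → ℝ) (w : Fin N → ℂ) : ℂ :=
  ∑ i, ∑ j, (B i j : ℂ) * (α i : ℂ) * w j

/-- `γ` is proportional to `α`. -/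
def CollinR {N : ℕ} (α γ : Fin N → ℝ) : Prop := ∃ t : ℝ, γ = t • α

/-- `γ₁ ∼ γ₂` iff `γ₁ + γ₂` or `γ₁ - γ₂` is an integer multiple of `α`. -/
def SeriesRelR {N : ℕ} (α γ₁ γ₂ : Fin N → ℝ) : Prop :=
  ∃ m : ℤ, γ₁ + γ₂ = (m : ℝ) • α ∨ γ₁ - γ₂ = (m : ℝ) • α

/-- `Γ` is a (maximal) `α`-series of `R`. -/
def IsSeriesR {N : ℕ} (R : Finset (Fin N → ℝ)) (α : Fin N → ℝ)
    (Γ : Finset (Fin N → ℝ)) : Prop :=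
  Γ.Nonempty ∧ (∀ γ ∈ Γ, γ ∈ R ∧ ¬ CollinR α γ) ∧
    (∀ γ₁ ∈ Γ, ∀ γ₂ ∈ Γ, SeriesRelR α γ₁ γ₂) ∧
    (∀ β ∈ R, ¬ CollinR α β → (∃ γ ∈ Γ, SeriesRelR α β γ) → β ∈ Γ)


lemma ipB_sub_left {N : ℕ} (B : Matrix (Fin N) (Fin N) ℝ) (u v w : Fin N → ℝ) (t : ℝ) :
    ipB B (u - t • v) w = ipB B u w - t * ipB B v w := by
  simp only [ipB, Finset.mul_sum, ← Finset.sum_sub_distrib, Pi.sub_apply, Pi.smul_apply,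
    smul_eq_mul]
  refine Finset.sum_congr rfl fun i _ => Finset.sum_congr rfl fun j _ => by ring

lemma ipB_symm {N : ℕ} (B : Matrix (Fin N) (Fin N) ℝ) (hB : B.PosDef) (u v : Fin N → ℝ) :
    ipB B u v = ipB B v u := by
  have h : ∀ i j, B i j = B j i := fun i j => by
    have := hB.isHermitian.apply i j
    simpa using this.symm
  unfold ipB
  rw [Finset.sum_comm]
  refine Finset.sum_congr rfl fun i _ => Finset.sum_congr rfl fun j _ => ?_
  rw [h j i]; ring

lemma ipB_self_ne {N : ℕ} (B : Matrix (Fin N) (Fin N) ℝ) (hB : B.PosDef) (u : Fin N → ℝ)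
    (hu : u ≠ 0) : ipB B u u ≠ 0 := by
  have h := hB.dotProduct_mulVec_pos hu
  have e : ipB B u u = star u ⬝ᵥ B.mulVec u := by
    simp only [ipB, dotProduct, Matrix.mulVec, Finset.mul_sum, star_trivial]
    refine Finset.sum_congr rfl fun i _ => Finset.sum_congr rfl fun j _ => by ring
  rw [e]; exact h.ne'

lemma ipBC_eq {N : ℕ} (B : Matrix (Fin N) (Fin N) ℝ) (u : Fin N → ℝ) (w : Fin N → ℂ) :
    ipBC B u w = (ipB B u (fun i => (w i).re) : ℂ) + (ipB B u (fun i => (w i).im) : ℂ)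
      * Complex.I := by
  simp only [ipB, ipBC, Complex.ofReal_sum, Finset.sum_mul, ← Finset.sum_add_distrib]
  refine Finset.sum_congr rfl fun i _ => Finset.sum_congr rfl fun j _ => ?_
  conv_lhs => rw [← Complex.re_add_im (w j)]
  push_cast; ring

/-- The reflection in `α`. -/
def reflB {N : ℕ} (B : Matrix (Fin N) (Fin N) ℝ) (α β : Fin N → ℝ) : Fin N → ℝ :=
  β - (2 * ipB B α β / ipB B α α) • α

lemma ipB_reflB {N : ℕ} (B : Matrix (Fin N) (Fin N) ℝ) (α β v : Fin N → ℝ) :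
    ipB B (reflB B α β) v = ipB B β v - (2 * ipB B α β / ipB B α α) * ipB B α v :=
  ipB_sub_left B β α v _

lemma ipB_reflB_self {N : ℕ} (B : Matrix (Fin N) (Fin N) ℝ) (hB : B.PosDef)
    (α β : Fin N → ℝ) (hα : α ≠ 0) : ipB B α (reflB B α β) = - ipB B α β := by
  rw [ipB_symm B hB, ipB_reflB, ipB_symm B hB β α]
  have := ipB_self_ne B hB α hα
  field_simp; ring

lemma reflB_reflB {N : ℕ} (B : Matrix (Fin N) (Fin N) ℝ) (hB : B.PosDef)
    (α β : Fin N → ℝ) (hα : α ≠ 0) : reflB B α (reflB B α β) = β := by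
  conv_lhs => unfold reflB
  change reflB B α β - (2 * ipB B α (reflB B α β) / ipB B α α) • α = β
  rw [ipB_reflB_self B hB α β hα]
  ext i
  simp only [reflB, Pi.sub_apply, Pi.smul_apply, smul_eq_mul]
  ring

/-- `G(β, v)` is proportional to `⟨β, v⟩`. -/
lemma G_root {N : ℕ} (B : Matrix (Fin N) (Fin N) ℝ) (hB : B.PosDef)
    (R : Finset (Fin N → ℝ)) (c : (Fin N → ℝ) → ℂ) (β : Fin N → ℝ) (hβ : β ≠ 0)
    (hrefl : ∀ γ ∈ R, reflB B β γ ∈ R) (hc : ∀ γ ∈ R, c (reflB B β γ) = c γ)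
    (v : Fin N → ℝ) :
    (∑ γ ∈ R, c γ * (ipB B γ β : ℂ) * (ipB B γ v : ℂ)) =
      (∑ γ ∈ R, c γ * (ipB B γ β : ℂ) * (ipB B γ β : ℂ)) / (ipB B β β : ℂ) * (ipB B β v : ℂ) := by
  have hne : (ipB B β β : ℂ) ≠ 0 := by exact_mod_cast ipB_self_ne B hB β hβ
  have h1 : (∑ γ ∈ R, c γ * (ipB B γ β : ℂ) * (ipB B γ v : ℂ)) =
      ∑ γ ∈ R, (-(c γ * (ipB B γ β : ℂ) * (ipB B γ v : ℂ)) +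
        c γ * (ipB B γ β : ℂ) * (ipB B γ β : ℂ) * (2 * (ipB B β v : ℂ) / (ipB B β β : ℂ))) := by
    refine Finset.sum_nbij' (reflB B β) (reflB B β) hrefl hrefl
      (fun γ _ => reflB_reflB B hB β γ hβ) (fun γ _ => reflB_reflB B hB β γ hβ) ?_
    intro γ hγ
    rw [hc γ hγ, ipB_symm B hB (reflB B β γ) β, ipB_reflB_self B hB β γ hβ, ipB_reflB,
      ipB_symm B hB β γ]
    push_cast
    field_simp
    ring
  rw [Finset.sum_add_distrib, Finset.sum_neg_distrib, ← Finset.sum_mul] at h1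
  field_simp at h1 ⊢
  linear_combination h1 / 2

/-- an irreducible crystallographic root system with Weyl-invariant
multiplicities satisfies
`Σ_{β ∈ Γ} c_β ⟨α,β⟩ (α∧β) = 0` for every root `α` and every `α`-series `Γ`;
consequently, if `G_ℛ` is non-degenerate then `(ℛ, c)` is a trigonometric ∨-system. -/
theorem rootSystem_is_trigVSystem {N : ℕ} (hN : 1 ≤ N)
    (B : Matrix (Fin N) (Fin N) ℝ) (hBpd : B.PosDef)
    (R : Finset (Fin N → ℝ)) (c : (Fin N → ℝ) → ℂ)
    (h0 : (0 : Fin N → ℝ) ∉ R)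
    (hspan : Submodule.span ℝ (R : Set (Fin N → ℝ)) = ⊤)
    (hirr : ¬ ∃ R₁ R₂ : Finset (Fin N → ℝ), R₁.Nonempty ∧ R₂.Nonempty ∧
      R₁ ∪ R₂ = R ∧ (∀ α ∈ R₁, α ∉ R₂) ∧ ∀ α ∈ R₁, ∀ β ∈ R₂, ipB B α β = 0)
    (hint : ∀ α ∈ R, ∀ β ∈ R, ∃ m : ℤ, 2 * ipB B α β = (m : ℝ) * ipB B α α)
    (hrefl : ∀ α ∈ R, ∀ β ∈ R, β - (2 * ipB B α β / ipB B α α) • α ∈ R)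
    (hcinv : ∀ α ∈ R, ∀ β ∈ R, c (β - (2 * ipB B α β / ipB B α α) • α) = c β) :
    (∀ α ∈ R, ∀ Γ : Finset (Fin N → ℝ), IsSeriesR R α Γ →
      ∀ a b : Fin N → ℝ, ∑ β ∈ Γ, c β * (ipB B α β : ℂ) *
        ((ipB B α a * ipB B β b - ipB B α b * ipB B β a : ℝ) : ℂ) = 0) ∧
    ((∀ u : Fin N → ℝ,
        (∀ v : Fin N → ℝ, (∑ α ∈ R, c α * (ipB B α u : ℂ) * (ipB B α v : ℂ)) = 0) →
        u = 0) →
      ∀ dual : (Fin N → ℝ) → (Fin N → ℂ),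
        (∀ β ∈ R, ∀ v : Fin N → ℝ,
          (∑ α ∈ R, c α * ipBC B α (dual β) * (ipB B α v : ℂ)) = (ipB B β v : ℂ)) →
        ∀ α ∈ R, ∀ Γ : Finset (Fin N → ℝ), IsSeriesR R α Γ →
          ∀ a b : Fin N → ℝ, ∑ β ∈ Γ, c β * ipBC B α (dual β) *
            ((ipB B α a * ipB B β b - ipB B α b * ipB B β a : ℝ) : ℂ) = 0) := by
  have hz : ∀ α ∈ R, α ≠ 0 := fun α hα h => h0 (h ▸ hα)
  have part1 : ∀ α ∈ R, ∀ Γ : Finset (Fin N → ℝ), IsSeriesR R α Γ →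
      ∀ a b : Fin N → ℝ, ∑ β ∈ Γ, c β * (ipB B α β : ℂ) *
        ((ipB B α a * ipB B β b - ipB B α b * ipB B β a : ℝ) : ℂ) = 0 := by
    intro α hα Γ hΓ a b
    obtain ⟨-, hsub, -, hmax⟩ := hΓ
    have hα0 := hz α hα
    have hne := ipB_self_ne B hBpd α hα0
    have key : ∀ β ∈ Γ, c β * (ipB B α β : ℂ) *
        ((ipB B α a * ipB B β b - ipB B α b * ipB B β a : ℝ) : ℂ) +
        c (reflB B α β) * (ipB B α (reflB B α β) : ℂ) *
        ((ipB B α a * ipB B (reflB B α β) b - ipB B α b * ipB B (reflB B α β) a : ℝ) : ℂ)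
          = 0 := by
      intro β hβ
      have h1 : c (reflB B α β) = c β := hcinv α hα β (hsub β hβ).1
      rw [h1, ipB_reflB_self B hBpd α β hα0, ipB_reflB, ipB_reflB]
      push_cast
      ring
    refine Finset.sum_involution (fun β _ => reflB B α β) key ?_ ?_ ?_
    · intro β hβ hf he
      have hk := key β hβ
      rw [he, ← two_mul] at hk
      exact hf ((mul_eq_zero.mp hk).resolve_left two_ne_zero)
    · intro β hβ
      obtain ⟨hβR, hβc⟩ := hsub β hβ
      refine hmax _ (hrefl α hα β hβR) ?_ ⟨β, hβ, ?_⟩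
      · rintro ⟨t, ht⟩
        refine hβc ⟨t + 2 * ipB B α β / ipB B α α, ?_⟩
        rw [add_smul, ← ht, reflB, sub_add_cancel]
      · obtain ⟨m, hm⟩ := hint α hα β hβR
        refine ⟨-m, Or.inr ?_⟩
        rw [reflB, hm, mul_div_cancel_right₀ _ hne]
        push_cast
        rw [neg_smul]
        abel
    · intro β hβ
      exact reflB_reflB B hBpd α β hα0
  refine ⟨part1, ?_⟩
  intro hnd dual hdual α hα Γ hΓ a b
  let L : (Fin N → ℝ) → ℂ := fun β =>
    (∑ γ ∈ R, c γ * (ipB B γ β : ℂ) * (ipB B γ β : ℂ)) / (ipB B β β : ℂ)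
  have hG : ∀ β ∈ R, ∀ v, (∑ γ ∈ R, c γ * (ipB B γ β : ℂ) * (ipB B γ v : ℂ)) =
      L β * (ipB B β v : ℂ) := fun β hβ v =>
    G_root B hBpd R c β (hz β hβ) (hrefl β hβ) (hcinv β hβ) v
  have hL : ∀ β ∈ R, L β = L α := by
    by_contra! hcon
    obtain ⟨β₀, hβ₀, hβne⟩ := hcon
    refine hirr ⟨R.filter (fun β => L β = L α), R.filter (fun β => ¬ L β = L α),
      ⟨α, by simp [hα]⟩, ⟨β₀, by simp [hβ₀, hβne]⟩, Finset.filter_union_filter_not_eq _ _, ?_, ?_⟩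
    · intro x hx hx'
      exact (Finset.mem_filter.mp hx').2 (Finset.mem_filter.mp hx).2
    · intro x hx y hy
      obtain ⟨hxR, hx⟩ := Finset.mem_filter.mp hx
      obtain ⟨hyR, hy⟩ := Finset.mem_filter.mp hy
      have e1 := hG x hxR y
      have e2 := hG y hyR x
      have e3 : (∑ γ ∈ R, c γ * (ipB B γ x : ℂ) * (ipB B γ y : ℂ)) =
          ∑ γ ∈ R, c γ * (ipB B γ y : ℂ) * (ipB B γ x : ℂ) :=
        Finset.sum_congr rfl fun γ _ => by ring
      rw [e1, e2, ipB_symm B hBpd y x, hx] at e3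
      by_contra hxy
      exact hy (mul_right_cancel₀ (by exact_mod_cast hxy) e3).symm
  have hLne : L α ≠ 0 := by
    intro h
    refine hz α hα (hnd α fun v => ?_)
    rw [hG α hα v, h, zero_mul]
  have hd : ∀ β ∈ R, ipBC B α (dual β) = (ipB B α β : ℂ) / L α := by
    intro β hβ
    have h := hdual β hβ α
    have e : (∑ γ ∈ R, c γ * ipBC B γ (dual β) * (ipB B γ α : ℂ)) =
        L α * ipBC B α (dual β) := by
      rw [ipBC_eq B α, mul_add, ← mul_assoc, ← hG α hα, ← hG α hα, Finset.sum_mul,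
        ← Finset.sum_add_distrib]
      refine Finset.sum_congr rfl fun γ _ => ?_
      rw [ipBC_eq]; ring
    rw [eq_div_iff hLne, ipB_symm B hBpd α β, ← h, e, mul_comm]
  have h1 := part1 α hα Γ hΓ a b
  have h2 : ∑ β ∈ Γ, c β * ipBC B α (dual β) *
      ((ipB B α a * ipB B β b - ipB B α b * ipB B β a : ℝ) : ℂ) =
      (∑ β ∈ Γ, c β * (ipB B α β : ℂ) *
        ((ipB B α a * ipB B β b - ipB B α b * ipB B β a : ℝ) : ℂ)) / L α := by
    rw [Finset.sum_div]
    refine Finset.sum_congr rfl fun β hβ => ?_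
    rw [hd β (hΓ.2.1 β hβ).1]
    ring
  rw [h2, h1, zero_div]


end
end

section
/- Let (𝒜,c) be a trigonometric ∨-system in V = ℂ^N, W ⊆ V* a linear subspace, and B = 𝒜 ∩ W a subsystem with span(B) = W. Let M : V → V be the linear operator M(v) = Σ_{β∈B} c_β β(v) β^∨ and set W^∨ = span{β^∨ : β ∈ B}. Then: (a) G_𝒜(u, M(v)) = G_B(u,v) for all u,v ∈ V; (b) for every α ∈ B, the vector α^∨ is an eigenvector of M; (c) the restriction of M to W^∨ is diagonalizable, so that W^∨ decomposes as a direct sum of eigenspaces of M. -/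
open scoped Classical
open Finset

noncomputable section

/-- Evaluation of a covector `α` on a vector `x` in `ℂ^N`. -/
def ev {N : ℕ} (α x : Fin N → ℂ) : ℂ := ∑ i, α i * x i

/-- The bilinear form `G_𝒜` associated to a configuration. -/
def Gform {N : ℕ} (A : Finset (Fin N → ℂ)) (c : (Fin N → ℂ) → ℂ)
    (u v : Fin N → ℂ) : ℂ :=
  ∑ α ∈ A, c α * ev α u * ev α v

/-- `(α ∧ β)(a, b) = α(a)β(b) - α(b)β(a)`. -/
def wedge {N : ℕ} (α β a b : Fin N → ℂ) : ℂ :=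
  ev α a * ev β b - ev α b * ev β a

/-- Non-degeneracy of `G_𝒜`. -/
def Nondeg {N : ℕ} (A : Finset (Fin N → ℂ)) (c : (Fin N → ℂ) → ℂ) : Prop :=
  ∀ u : Fin N → ℂ, (∀ v : Fin N → ℂ, Gform A c u v = 0) → u = 0

/-- `dual` assigns to each covector `γ ∈ 𝒜` its `G_𝒜`-dual vector `γ^∨`. -/
def IsDual {N : ℕ} (A : Finset (Fin N → ℂ)) (c : (Fin N → ℂ) → ℂ)
    (dual : (Fin N → ℂ) → Fin N → ℂ) : Prop :=
  ∀ γ ∈ A, ∀ v : Fin N → ℂ, Gform A c (dual γ) v = ev γ v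

/-- `γ` is proportional to `α`. -/
def Collin {N : ℕ} (α γ : Fin N → ℂ) : Prop := ∃ t : ℂ, γ = t • α

/-- `γ₁ ∼ γ₂` iff `γ₁ + γ₂` or `γ₁ - γ₂` is an integer multiple of `α`. -/
def SeriesRel {N : ℕ} (α γ₁ γ₂ : Fin N → ℂ) : Prop :=
  ∃ m : ℤ, γ₁ + γ₂ = (m : ℂ) • α ∨ γ₁ - γ₂ = (m : ℂ) • α

/-- `Γ` is an (maximal) `α`-series of the configuration `A`. -/
def IsSeries {N : ℕ} (A : Finset (Fin N → ℂ)) (α : Fin N → ℂ)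
    (Γ : Finset (Fin N → ℂ)) : Prop :=
  Γ.Nonempty ∧ (∀ γ ∈ Γ, γ ∈ A ∧ ¬ Collin α γ) ∧
    (∀ γ₁ ∈ Γ, ∀ γ₂ ∈ Γ, SeriesRel α γ₁ γ₂) ∧
    (∀ β ∈ A, ¬ Collin α β → (∃ γ ∈ Γ, SeriesRel α β γ) → β ∈ Γ)

/-- The trigonometric ∨-conditions. -/
def IsTrigVSystem {N : ℕ} (A : Finset (Fin N → ℂ)) (c : (Fin N → ℂ) → ℂ)
    (dual : (Fin N → ℂ) → Fin N → ℂ) : Prop :=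
  ∀ α ∈ A, ∀ Γ : Finset (Fin N → ℂ), IsSeries A α Γ →
    ∀ a b : Fin N → ℂ, ∑ β ∈ Γ, c β * ev α (dual β) * wedge α β a b = 0

/-- The form `G^{(1)}_𝒜` evaluated at `(u, v)`. -/
def G1form {N : ℕ} (A : Finset (Fin N → ℂ)) (c : (Fin N → ℂ) → ℂ)
    (u v : Fin N → ℂ) : ℂ :=
  ∑ α ∈ A, ∑ β ∈ A, c α * c β * wedge α β u v ^ 2

/-- The form `G^{(2)}_𝒜` evaluated at `(u, v)`. -/
def G2form {N : ℕ} (A : Finset (Fin N → ℂ)) (c : (Fin N → ℂ) → ℂ)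
    (dual : (Fin N → ℂ) → Fin N → ℂ) (u v : Fin N → ℂ) : ℂ :=
  ∑ α ∈ A, ∑ β ∈ A,
    c α * c β * Gform A c (dual α) (dual β) * wedge α β u v ^ 2

/-- Complex cotangent. -/
def ccot (z : ℂ) : ℂ := Complex.cos z / Complex.sin z

/-- The matrix `F_i(x)` of third derivatives of the prepotential, `1 ≤ i ≤ N`. -/
def Fmat {N : ℕ} (A : Finset (Fin N → ℂ)) (c : (Fin N → ℂ) → ℂ) (lam : ℂ)
    (i : Fin N) (x : Fin N → ℂ) : Matrix (Fin N ⊕ Unit) (Fin N ⊕ Unit) ℂ :=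
  Matrix.of fun p q =>
    match p, q with
    | Sum.inl p, Sum.inl q => lam * ∑ α ∈ A, c α * α i * α p * α q * ccot (ev α x)
    | Sum.inl p, Sum.inr _ => 2 * ∑ α ∈ A, c α * α i * α p
    | Sum.inr _, Sum.inl q => 2 * ∑ α ∈ A, c α * α i * α q
    | Sum.inr _, Sum.inr _ => 0

/-- The constant matrix `F_{N+1}`. -/
def Flast {N : ℕ} (A : Finset (Fin N → ℂ)) (c : (Fin N → ℂ) → ℂ) :
    Matrix (Fin N ⊕ Unit) (Fin N ⊕ Unit) ℂ :=
  Matrix.of fun p q =>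
    match p, q with
    | Sum.inl p, Sum.inl q => 2 * ∑ α ∈ A, c α * α p * α q
    | Sum.inr _, Sum.inr _ => 2
    | _, _ => 0

/-- `(𝒜, c, λ)` satisfies the trigonometric WDVV equations. -/
def SatisfiesWDVV {N : ℕ} (A : Finset (Fin N → ℂ)) (c : (Fin N → ℂ) → ℂ)
    (lam : ℂ) : Prop :=
  IsUnit (Flast A c) ∧
    ∀ x : Fin N → ℂ, (∀ α ∈ A, Complex.sin (ev α x) ≠ 0) →
      ∀ i j : Fin N,
        Fmat A c lam i x * (Flast A c)⁻¹ * Fmat A c lam j x =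
          Fmat A c lam j x * (Flast A c)⁻¹ * Fmat A c lam i x

/-- The covectors of `𝒜` lie in a lattice of full rank `N` in `(ℂ^N)^*`. -/
def InLattice {N : ℕ} (A : Finset (Fin N → ℂ)) : Prop :=
  ∃ L : Fin N → Fin N → ℂ, LinearIndependent ℂ L ∧
    ∀ α ∈ A, ∃ m : Fin N → ℤ, α = ∑ i, (m i : ℂ) • L i

/-- No two covectors of `𝒜` are negatively proportional. -/
def PositiveSystem {N : ℕ} (A : Finset (Fin N → ℂ)) : Prop :=
  ∀ α ∈ A, ∀ t : ℝ, t < 0 → (t : ℂ) • α ∉ A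

/-- The operator `M(v) = Σ_{β ∈ B} c_β β(v) β^∨`. -/
def Mop {N : ℕ} (B : Finset (Fin N → ℂ)) (c : (Fin N → ℂ) → ℂ)
    (dual : (Fin N → ℂ) → Fin N → ℂ) (v : Fin N → ℂ) : Fin N → ℂ :=
  ∑ β ∈ B, (c β * ev β v) • dual β

/-- `W^∨ = span{β^∨ : β ∈ B}`. -/
def Wdual {N : ℕ} (B : Finset (Fin N → ℂ))
    (dual : (Fin N → ℂ) → Fin N → ℂ) : Submodule ℂ (Fin N → ℂ) :=
  Submodule.span ℂ (dual '' (B : Set (Fin N → ℂ)))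

/-- `B` is non-isotropic: the restriction of `G_B` to `W^∨` is non-degenerate. -/
def NonIsotropic {N : ℕ} (B : Finset (Fin N → ℂ)) (c : (Fin N → ℂ) → ℂ)
    (dual : (Fin N → ℂ) → Fin N → ℂ) : Prop :=
  ∀ u ∈ Wdual B dual, (∀ v ∈ Wdual B dual, Gform B c u v = 0) → u = 0
theorem ev_add' {N : ℕ} (α x y : Fin N → ℂ) : ev α (x + y) = ev α x + ev α y := by
  simp [ev, mul_add, Finset.sum_add_distrib]

theorem ev_smul' {N : ℕ} (α x : Fin N → ℂ) (t : ℂ) : ev α (t • x) = t * ev α x := by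
  simp only [ev, Finset.mul_sum, Pi.smul_apply, smul_eq_mul]
  exact Finset.sum_congr rfl fun i _ => by ring

theorem ev_smul_left' {N : ℕ} (α x : Fin N → ℂ) (t : ℂ) : ev (t • α) x = t * ev α x := by
  simp only [ev, Finset.mul_sum, Pi.smul_apply, smul_eq_mul]
  exact Finset.sum_congr rfl fun i _ => by ring

theorem Gform_add' {N : ℕ} (A : Finset (Fin N → ℂ)) (c : (Fin N → ℂ) → ℂ)
    (u v w : Fin N → ℂ) : Gform A c u (v + w) = Gform A c u v + Gform A c u w := by
  simp [Gform, ev_add', mul_add, Finset.sum_add_distrib]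

theorem Gform_smul' {N : ℕ} (A : Finset (Fin N → ℂ)) (c : (Fin N → ℂ) → ℂ)
    (u v : Fin N → ℂ) (t : ℂ) : Gform A c u (t • v) = t * Gform A c u v := by
  simp only [Gform, ev_smul', Finset.mul_sum]
  exact Finset.sum_congr rfl fun i _ => by ring

theorem Gform_comm' {N : ℕ} (A : Finset (Fin N → ℂ)) (c : (Fin N → ℂ) → ℂ)
    (u v : Fin N → ℂ) : Gform A c u v = Gform A c v u := by
  simp only [Gform]
  exact Finset.sum_congr rfl fun i _ => by ring

theorem Gform_sum' {N : ℕ} (A : Finset (Fin N → ℂ)) (c : (Fin N → ℂ) → ℂ)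
    (u : Fin N → ℂ) (B : Finset (Fin N → ℂ)) (f : (Fin N → ℂ) → Fin N → ℂ) :
    Gform A c u (∑ β ∈ B, f β) = ∑ β ∈ B, Gform A c u (f β) := by
  induction B using Finset.induction_on with
  | empty => simp [Gform, ev]
  | insert a s ha ih => rw [Finset.sum_insert ha, Finset.sum_insert ha, Gform_add', ih]

theorem SeriesRel_symm' {N : ℕ} (α x y : Fin N → ℂ) (h : SeriesRel α x y) :
    SeriesRel α y x := by
  obtain ⟨m, h | h⟩ := h
  · exact ⟨m, Or.inl (by rw [add_comm, h])⟩
  · exact ⟨-m, Or.inr (by rw [← neg_sub, h]; push_cast; rw [neg_smul])⟩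

theorem SeriesRel_trans' {N : ℕ} (α x y z : Fin N → ℂ) (h : SeriesRel α x y)
    (h' : SeriesRel α y z) : SeriesRel α x z := by
  obtain ⟨m, h | h⟩ := h <;> obtain ⟨n, h' | h'⟩ := h'
  · exact ⟨m - n, Or.inr (by push_cast; rw [sub_smul, ← h, ← h']; abel)⟩
  · exact ⟨m - n, Or.inl (by push_cast; rw [sub_smul, ← h, ← h']; abel)⟩
  · exact ⟨m + n, Or.inl (by push_cast; rw [add_smul, ← h, ← h']; abel)⟩
  · exact ⟨m + n, Or.inr (by push_cast; rw [add_smul, ← h, ← h']; abel)⟩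

theorem exists_ev_ne' {N : ℕ} (α : Fin N → ℂ) (h : α ≠ 0) : ∃ a, ev α a ≠ 0 := by
  obtain ⟨i, hi⟩ := Function.ne_iff.mp h
  exact ⟨Pi.single i 1, by simpa [ev, Pi.single_apply] using hi⟩

theorem SeriesRel_mem' {N : ℕ} (α x y : Fin N → ℂ) (W : Submodule ℂ (Fin N → ℂ))
    (hα : α ∈ W) (hy : y ∈ W) (h : SeriesRel α x y) : x ∈ W := by
  obtain ⟨m, h | h⟩ := h
  · rw [eq_sub_of_add_eq h]
    exact W.sub_mem (W.smul_mem _ hα) hy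
  · rw [eq_add_of_sub_eq h]
    exact W.add_mem (W.smul_mem _ hα) hy

theorem wedge_sum' {N : ℕ} (A : Finset (Fin N → ℂ)) (c : (Fin N → ℂ) → ℂ)
    (dual : (Fin N → ℂ) → Fin N → ℂ)
    (hvsys : IsTrigVSystem A c dual)
    (W : Submodule ℂ (Fin N → ℂ)) (B : Finset (Fin N → ℂ))
    (hB : ∀ α : Fin N → ℂ, α ∈ B ↔ α ∈ A ∧ α ∈ W)
    (α : Fin N → ℂ) (hα : α ∈ B) (a b : Fin N → ℂ) :
    ∑ β ∈ B, c β * ev α (dual β) * wedge α β a b = 0 := by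
  obtain ⟨hαA, hαW⟩ := (hB α).1 hα
  rw [← Finset.sum_filter_add_sum_filter_not B (fun β => Collin α β)]
  have h1 : ∑ β ∈ B with Collin α β, c β * ev α (dual β) * wedge α β a b = 0 := by
    apply Finset.sum_eq_zero
    intro β hβ
    obtain ⟨t, rfl⟩ := (Finset.mem_filter.1 hβ).2
    simp only [wedge, ev_smul_left']
    ring
  rw [h1, zero_add]
  let R : Setoid (Fin N → ℂ) :=
    ⟨SeriesRel α, fun x => ⟨0, Or.inr (by simp)⟩, fun {x y} h => SeriesRel_symm' α x y h,
      fun {x y z} h h' => SeriesRel_trans' α x y z h h'⟩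
  apply Finset.sum_cancels_of_partition_cancels R
  intro x hx
  have hx' := Finset.mem_filter.1 hx
  apply hvsys α hαA
  refine ⟨⟨x, Finset.mem_filter.2 ⟨hx, R.refl x⟩⟩, ?_, ?_, ?_⟩
  · intro γ hγ
    have h := Finset.mem_filter.1 (Finset.mem_filter.1 hγ).1
    exact ⟨((hB γ).1 h.1).1, h.2⟩
  · intro γ₁ h₁ γ₂ h₂
    exact R.trans (Finset.mem_filter.1 h₁).2 (R.symm (Finset.mem_filter.1 h₂).2)
  · rintro β hβ hc ⟨γ, hγ, hr⟩
    have hβx : SeriesRel α β x := R.trans hr (Finset.mem_filter.1 hγ).2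
    exact Finset.mem_filter.2 ⟨Finset.mem_filter.2
      ⟨(hB β).2 ⟨hβ, SeriesRel_mem' α β x W hαW ((hB x).1 hx'.1).2 hβx⟩, hc⟩, hβx⟩

theorem Mop_add' {N : ℕ} (B : Finset (Fin N → ℂ)) (c : (Fin N → ℂ) → ℂ)
    (dual : (Fin N → ℂ) → Fin N → ℂ) (v w : Fin N → ℂ) :
    Mop B c dual (v + w) = Mop B c dual v + Mop B c dual w := by
  simp [Mop, ev_add', mul_add, add_smul, Finset.sum_add_distrib]

theorem Mop_smul' {N : ℕ} (B : Finset (Fin N → ℂ)) (c : (Fin N → ℂ) → ℂ)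
    (dual : (Fin N → ℂ) → Fin N → ℂ) (t : ℂ) (v : Fin N → ℂ) :
    Mop B c dual (t • v) = t • Mop B c dual v := by
  simp only [Mop, ev_smul', Finset.smul_sum, smul_smul]
  exact Finset.sum_congr rfl fun i _ => by congr 1; ring

theorem Mop_zero' {N : ℕ} (B : Finset (Fin N → ℂ)) (c : (Fin N → ℂ) → ℂ)
    (dual : (Fin N → ℂ) → Fin N → ℂ) : Mop B c dual 0 = 0 := by
  simp [Mop, ev]

/-- properties of the operator `M` associated to a subsystem `B = 𝒜 ∩ W`
of a trigonometric ∨-system. -/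
theorem subsystem_operator_properties {N : ℕ}
    (A : Finset (Fin N → ℂ)) (c : (Fin N → ℂ) → ℂ)
    (dual : (Fin N → ℂ) → Fin N → ℂ)
    (hA0 : ∀ α ∈ A, α ≠ (0 : Fin N → ℂ))
    (hnd : Nondeg A c)
    (hdual : IsDual A c dual)
    (hvsys : IsTrigVSystem A c dual)
    (W : Submodule ℂ (Fin N → ℂ)) (B : Finset (Fin N → ℂ))
    (hB : ∀ α : Fin N → ℂ, α ∈ B ↔ α ∈ A ∧ α ∈ W)
    (hWspan : W = Submodule.span ℂ (B : Set (Fin N → ℂ))) :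
    (∀ u v : Fin N → ℂ, Gform A c u (Mop B c dual v) = Gform B c u v) ∧
    (∀ α ∈ B, ∃ μ : ℂ, Mop B c dual (dual α) = μ • dual α) ∧
    (∃ (k : ℕ) (μ : Fin k → ℂ), Function.Injective μ ∧
      ∀ w ∈ Wdual B dual, ∃ u : Fin k → (Fin N → ℂ),
        (∀ i, u i ∈ Wdual B dual) ∧
        (∀ i, Mop B c dual (u i) = μ i • u i) ∧ w = ∑ i, u i) := by
  have ha : ∀ u v : Fin N → ℂ, Gform A c u (Mop B c dual v) = Gform B c u v := by
    intro u v
    rw [Mop, Gform_sum']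
    conv_rhs => rw [Gform]
    refine Finset.sum_congr rfl fun β hβ => ?_
    rw [Gform_smul', Gform_comm', hdual β ((hB β).1 hβ).1]
    ring
  have hb : ∀ α ∈ B, ∃ μ : ℂ, Mop B c dual (dual α) = μ • dual α := by
    intro α hα
    have hαA := ((hB α).1 hα).1
    obtain ⟨a, hne⟩ := exists_ev_ne' α (hA0 α hαA)
    refine ⟨Gform B c a (dual α) / ev α a, ?_⟩
    rw [← sub_eq_zero]
    apply hnd
    intro b
    have hsym : ∀ β ∈ B, ev α (dual β) = ev β (dual α) := by
      intro β hβ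
      rw [← hdual α hαA, Gform_comm', hdual β ((hB β).1 hβ).1]
    have hw := wedge_sum' A c dual hvsys W B hB α hα a b
    have hw2 : ev α a * Gform B c b (dual α) - ev α b * Gform B c a (dual α) = 0 := by
      rw [← hw, Gform, Gform, Finset.mul_sum, Finset.mul_sum, ← Finset.sum_sub_distrib]
      refine Finset.sum_congr rfl fun β hβ => ?_
      rw [hsym β hβ, wedge]
      ring
    rw [Gform_comm', sub_eq_add_neg, ← neg_smul, Gform_add', Gform_smul', ha,
      Gform_comm' A c b, hdual α hαA]
    field_simp
    linear_combination hw2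
  refine ⟨ha, hb, ?_⟩
  choose! m hm using hb
  let S : Finset ℂ := B.image m
  let e := S.equivFin
  refine ⟨S.card, fun i => (e.symm i : ℂ),
    fun i j h => e.symm.injective (Subtype.ext h), ?_⟩
  intro w hw
  unfold Wdual at hw
  induction hw using Submodule.span_induction with
  | mem x hx =>
    obtain ⟨α, hα, rfl⟩ := hx
    have hα' : α ∈ B := hα
    have hmem : dual α ∈ Wdual B dual := Submodule.subset_span ⟨α, hα, rfl⟩
    have hS : m α ∈ S := Finset.mem_image_of_mem m hα'
    refine ⟨Pi.single (e ⟨m α, hS⟩) (dual α), ?_, ?_, ?_⟩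
    · intro i
      by_cases h : i = e ⟨m α, hS⟩
      · subst h
        simpa using hmem
      · rw [Pi.single_eq_of_ne h]
        exact Submodule.zero_mem _
    · intro i
      by_cases h : i = e ⟨m α, hS⟩
      · subst h
        simpa using hm α hα'
      · rw [Pi.single_eq_of_ne h, Mop_zero', smul_zero]
    · rw [Finset.sum_pi_single']
      simp
  | zero =>
    exact ⟨0, fun i => Submodule.zero_mem _, fun i => by simp [Mop_zero'], by simp⟩
  | add x y _ _ hx hy =>
    obtain ⟨u, h1, h2, h3⟩ := hx
    obtain ⟨u', h1', h2', h3'⟩ := hy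
    refine ⟨u + u', fun i => Submodule.add_mem _ (h1 i) (h1' i), fun i => ?_, ?_⟩
    · rw [Pi.add_apply, Mop_add', h2, h2', smul_add]
    · simp only [Pi.add_apply]
      rw [Finset.sum_add_distrib, ← h3, ← h3']
  | smul t x _ hx =>
    obtain ⟨u, h1, h2, h3⟩ := hx
    refine ⟨t • u, fun i => Submodule.smul_mem _ t (h1 i), fun i => ?_, ?_⟩
    · rw [Pi.smul_apply, Mop_smul', h2, smul_comm]
    · simp only [Pi.smul_apply]
      rw [← Finset.smul_sum, ← h3]
end
end
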